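/- arXiv:1511.05090 — 3 statements merged into one kernel-verified Lean document; each statement's English description precedes it below -/
import Mathlib

section
/- Let ρ be a d×d complex density matrix, let n ≥ 1, let y > 1 be a real number with y(y−1) > d, and let 1 ≤ k ≤ n. Suppose A is a Hermitian n-site matrix that is orthogonal to all (k−1)-local operators, i.e. Tr(ρ^⊗n · B† · A) = 0 for every subset Σ ⊆ {1,…,n} with |Σ| ≤ k−1 and every B ∈ T_Σ (including the identity, for Σ = ∅). Then the coarse-grained squared Bures norm under D_y^⊗n satisfies ‖A‖²_{D_y^⊗n} ≤ d^k · y^(−2k) · (1 − y⁻¹)^(−k) · ‖A‖², where ‖A‖² = Tr(ρ^⊗n · A · A). -/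
open scoped ComplexOrder
open Matrix

noncomputable section

/-- The `n`-fold tensor power of a `d×d` matrix, on sites indexed by `Fin n → Fin d`:
`(ρ^{⊗n})(x,z) = ∏ i, ρ (x i) (z i)`. -/
def tensorPow (d n : ℕ) (ρ : Matrix (Fin d) (Fin d) ℂ) :
    Matrix (Fin n → Fin d) (Fin n → Fin d) ℂ :=
  fun x z => ∏ i, ρ (x i) (z i)

/-- Tensor product `A₁ ⊗ ⋯ ⊗ Aₙ` of single-site matrices. -/
def siteProd (d n : ℕ) (A : Fin n → Matrix (Fin d) (Fin d) ℂ) :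
    Matrix (Fin n → Fin d) (Fin n → Fin d) ℂ :=
  fun x z => ∏ i, A i (x i) (z i)

/-- `Ω_σ(A) = (σA + Aσ)/2`. -/
def Omega {m : Type*} [Fintype m] (σ A : Matrix m m ℂ) : Matrix m m ℂ :=
  (1 / 2 : ℂ) • (σ * A + A * σ)

/-- The depolarizing channel `D_y(A) = y⁻¹ A + (1 - y⁻¹) (Tr A / d) I` applied to site `i`
of an `n`-site matrix. -/
def depolSite (d n : ℕ) (y : ℝ) (i : Fin n)
    (M : Matrix (Fin n → Fin d) (Fin n → Fin d) ℂ) :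
    Matrix (Fin n → Fin d) (Fin n → Fin d) ℂ :=
  fun x z => ((y⁻¹ : ℝ) : ℂ) * M x z +
    ((1 - y⁻¹ : ℝ) : ℂ) / (d : ℂ) *
      (if x i = z i then ∑ a : Fin d, M (Function.update x i a) (Function.update z i a) else 0)

/-- `D_y^{⊗n}`: the depolarizing channel applied to every one of the `n` sites. -/
def depolPow (d n : ℕ) (y : ℝ) :
    Matrix (Fin n → Fin d) (Fin n → Fin d) ℂ → Matrix (Fin n → Fin d) (Fin n → Fin d) ℂ :=
  (List.finRange n).foldr (fun i f => depolSite d n y i ∘ f) id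

/-- `T_Σ`: the linear span of operators acting as `aᵢ` with `Tr(ρ aᵢ) = 0` on each site
`i ∈ S` and as the identity on all other sites. -/
def TS (d n : ℕ) (ρ : Matrix (Fin d) (Fin d) ℂ) (S : Finset (Fin n)) :
    Submodule ℂ (Matrix (Fin n → Fin d) (Fin n → Fin d) ℂ) :=
  Submodule.span ℂ {M | ∃ a : Fin n → Matrix (Fin d) (Fin d) ℂ,
    (∀ i ∈ S, (ρ * a i).trace = 0) ∧ (∀ i ∉ S, a i = 1) ∧ M = siteProd d n a}

/-- The permutation unitary `U_π`, with entries `(U_π)_{x,y} = 1` iff `x = y ∘ π⁻¹`. -/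
def permU (d n : ℕ) (π : Equiv.Perm (Fin n)) :
    Matrix (Fin n → Fin d) (Fin n → Fin d) ℂ :=
  fun x z => if x = z ∘ ⇑π⁻¹ then 1 else 0

/-- The symmetrizing channel `P(A) = (1/n!) ∑_π U_π A U_π†`. -/
def symmetrize (d n : ℕ) (A : Matrix (Fin n → Fin d) (Fin n → Fin d) ℂ) :
    Matrix (Fin n → Fin d) (Fin n → Fin d) ℂ :=
  ((n.factorial : ℂ))⁻¹ • ∑ π : Equiv.Perm (Fin n), permU d n π * A * (permU d n π)ᴴ

/-- Vertex operator `G_α^{(n)} = (I + (i/√n)α)^{⊗n}`. -/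
def GVertex (d n : ℕ) (α : Matrix (Fin d) (Fin d) ℂ) :
    Matrix (Fin n → Fin d) (Fin n → Fin d) ℂ :=
  tensorPow d n (1 + (Complex.I / (Real.sqrt n : ℂ)) • α)

/-!
Write `σ = D_y(ρ)` and `w = y(y-1)/d`. On vectorized matrices a product state is a product of Gram
matrices: `G` for the form `Tr (ρ A† B)`, `H` for `Tr (σ A† B)`. One site of the channel splits as
`D_y = V + U` with `V X = y⁻¹ (X - Tr (ρ X))` and `U X = Tr (σ X)`, whose ranges are `G`-orthogonal.
Since `ρ ≤ 1`, we have `(1 - y⁻¹)/d • ρ ≤ σ`, and comparing the variances of `X` in `ρ` and in `σ`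
gives `w V†GV + U†GU ≤ H`.

Expand `D_y^{⊗n}` over the set `S` of sites carrying `V`. The term of `S` maps into `T_S`, so
against `A` only the part `W` with `|S| ≥ k` survives. Tensoring the one-site inequality gives
`w^k W†G^{⊗n}W ≤ H^{⊗n}`; this is where `w ≥ 1` enters, through `w^k ≤ w^{|S|}`. Finally, if `B` is
the logarithmic derivative of the coarse-grained perturbation, its squared norm
`N = Tr (σ^{⊗n} B²)` also equals `Re Tr (ρ^{⊗n} (W B)† A)`, and Cauchy–Schwarz yields
`w^k N ≤ ‖A‖²`.
-/

section PiKronecker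

variable {ι κ : Type*} [Fintype ι]

/-- The tensor product `⨂ᵢ A i` of a finite family of matrices, indexed by tuples; `siteProd` and
`tensorPow` are instances of it by definition. -/
def piKronecker {R l m : Type*} [CommMonoid R] (A : ι → Matrix l m R) :
    Matrix (ι → l) (ι → m) R :=
  of fun x z => ∏ i, A i (x i) (z i)

section Algebra

variable {R : Type*} [CommSemiring R]

lemma conjTranspose_piKronecker [StarRing R] (A : ι → Matrix κ κ R) :
    (piKronecker A)ᴴ = piKronecker fun i => (A i)ᴴ := by
  ext x z
  simp only [piKronecker, conjTranspose_apply, of_apply, star_prod]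

lemma piKronecker_eq_zero {A : ι → Matrix κ κ R} {i : ι} (h : A i = 0) : piKronecker A = 0 := by
  ext x z
  exact Finset.prod_eq_zero (Finset.mem_univ i) (by rw [h, Matrix.zero_apply])

lemma piKronecker_smul (c : ι → R) (A : ι → Matrix κ κ R) :
    piKronecker (fun i => c i • A i) = (∏ i, c i) • piKronecker A := by
  ext x z
  simp only [piKronecker, of_apply, Matrix.smul_apply, smul_eq_mul, Finset.prod_mul_distrib]

variable [DecidableEq ι]

lemma piKronecker_add (A B : ι → Matrix κ κ R) :
    piKronecker (A + B) = ∑ S : Finset ι, piKronecker (S.piecewise A B) := by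
  ext x z
  simp only [piKronecker, of_apply, Pi.add_apply, Matrix.add_apply, Matrix.sum_apply,
    Fintype.prod_add]
  refine Finset.sum_congr rfl fun S _ => ?_
  rw [← Finset.prod_mul_prod_compl S fun i => S.piecewise A B i (x i) (z i)]
  congr 1 <;> refine Finset.prod_congr rfl fun i hi => ?_
  · rw [Finset.piecewise_eq_of_mem _ _ _ hi]
  · rw [Finset.piecewise_eq_of_notMem _ _ _ (Finset.mem_compl.mp hi)]

variable [Fintype κ]

lemma piKronecker_mul (A B : ι → Matrix κ κ R) :
    piKronecker (A * B) = piKronecker A * piKronecker B := by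
  ext x z
  simp only [piKronecker, of_apply, Pi.mul_apply, mul_apply, Fintype.prod_sum,
    Finset.prod_mul_distrib]

lemma piKronecker_mulVec_prod (A : ι → Matrix κ κ R) (v : ι → κ → R) :
    (piKronecker A *ᵥ fun q => ∏ i, v i (q i)) = fun p => ∏ i, (A i *ᵥ v i) (p i) := by
  ext p
  simp only [piKronecker, mulVec, dotProduct, of_apply, Fintype.prod_sum, Finset.prod_mul_distrib]

end Algebra

section Order

open scoped MatrixOrder

variable {𝕜 : Type*} [RCLike 𝕜] [Finite κ]

lemma piKronecker_nonneg {A : ι → Matrix κ κ 𝕜} (hA : 0 ≤ A) : 0 ≤ piKronecker A := by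
  classical
  have := Fintype.ofFinite κ
  choose C hC using fun i => CStarAlgebra.nonneg_iff_eq_star_mul_self.mp (hA i)
  have hAC : piKronecker A = star (piKronecker C) * piKronecker C := by
    rw [star_eq_conjTranspose, conjTranspose_piKronecker, ← piKronecker_mul]
    exact congrArg piKronecker (funext hC)
  exact hAC ▸ star_mul_self_nonneg _

lemma piKronecker_mono {A B : ι → Matrix κ κ 𝕜} (hA : 0 ≤ A) (hAB : A ≤ B) :
    piKronecker A ≤ piKronecker B := by
  classical
  have hpos (S : Finset ι) : 0 ≤ piKronecker (S.piecewise A (B - A)) :=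
    piKronecker_nonneg fun i => S.piecewise_cases A (B - A) (0 ≤ ·) (hA i) (sub_nonneg.mpr (hAB i))
  calc piKronecker A = piKronecker (Finset.univ.piecewise A (B - A)) := by
        rw [Finset.piecewise_univ]
    _ ≤ ∑ S : Finset ι, piKronecker (S.piecewise A (B - A)) :=
        Finset.single_le_sum (fun S _ => hpos S) (Finset.mem_univ _)
    _ = piKronecker B := by rw [← piKronecker_add, add_sub_cancel]

end Order

end PiKronecker

section MixedPow

variable {ι κ : Type*} [Fintype ι] [DecidableEq ι]

/-- The tensor product acting as `V` on the sites in `S` and as `U` on all other sites. -/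
def mixedPow {R : Type*} [CommSemiring R] (S : Finset ι) (V U : Matrix κ κ R) :
    Matrix (ι → κ) (ι → κ) R :=
  piKronecker (S.piecewise (fun _ => V) fun _ => U)

/-- The part of `(V + U)^{⊗ι}` in which `V` acts on at least `k` sites. -/
def nonlocalPart {R : Type*} (ι : Type*) [Fintype ι] [DecidableEq ι] [CommSemiring R] (k : ℕ)
    (V U : Matrix κ κ R) : Matrix (ι → κ) (ι → κ) R :=
  ∑ S : Finset ι with k ≤ S.card, mixedPow S V U

section Algebra

variable {R : Type*} [CommSemiring R]

lemma piKronecker_const_add (V U : Matrix κ κ R) :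
    piKronecker (fun _ : ι => V + U) = ∑ S : Finset ι, mixedPow S V U :=
  piKronecker_add (fun _ => V) fun _ => U

lemma mixedPow_smul_left (S : Finset ι) (w : R) (V U : Matrix κ κ R) :
    mixedPow S (w • V) U = w ^ S.card • mixedPow S V U := by
  have hsite : S.piecewise (fun _ => w • V) (fun _ => U)
      = fun i => (if i ∈ S then w else 1) • S.piecewise (fun _ => V) (fun _ => U) i := by
    ext1 i
    by_cases hi : i ∈ S <;> simp [hi]
  rw [mixedPow, hsite, piKronecker_smul, Finset.prod_ite_mem, Finset.univ_inter,
    Finset.prod_const, mixedPow]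

variable [Fintype κ] [StarRing R] {V U G : Matrix κ κ R}

lemma conjTranspose_mixedPow_mul_mul_mixedPow (hG : G.IsHermitian) (hUV : Uᴴ * G * V = 0)
    (S T : Finset ι) :
    (mixedPow S V U)ᴴ * piKronecker (fun _ => G) * mixedPow T V U
      = if S = T then mixedPow S (Vᴴ * G * V) (Uᴴ * G * U) else 0 := by
  have hVU : Vᴴ * G * U = 0 := by
    simpa [hG.eq, Matrix.mul_assoc] using congrArg conjTranspose hUV
  simp only [mixedPow, conjTranspose_piKronecker, ← piKronecker_mul]
  split_ifs with hST
  · refine congrArg piKronecker (funext fun i => ?_)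
    subst hST
    by_cases hi : i ∈ S <;> simp [hi]
  · obtain ⟨i, hi⟩ : ∃ i, ¬(i ∈ S ↔ i ∈ T) := by simpa [Finset.ext_iff] using hST
    refine piKronecker_eq_zero (i := i) ?_
    by_cases hS : i ∈ S <;> by_cases hT : i ∈ T <;> simp_all

lemma conjTranspose_nonlocalPart_mul_mul_nonlocalPart (hG : G.IsHermitian)
    (hUV : Uᴴ * G * V = 0) (k : ℕ) :
    (nonlocalPart ι k V U)ᴴ * piKronecker (fun _ => G) * nonlocalPart ι k V U
      = nonlocalPart ι k (Vᴴ * G * V) (Uᴴ * G * U) := by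
  simp only [nonlocalPart, conjTranspose_sum, Finset.sum_mul, Finset.mul_sum,
    conjTranspose_mixedPow_mul_mul_mixedPow hG hUV]
  exact Finset.sum_congr rfl fun S hS => by rw [Finset.sum_ite_eq', if_pos hS]

end Algebra

section Order

open scoped MatrixOrder

variable {𝕜 : Type*} [RCLike 𝕜] {V U G H : Matrix κ κ 𝕜}

lemma mixedPow_nonneg [Finite κ] (hV : 0 ≤ V) (hU : 0 ≤ U) (S : Finset ι) :
    0 ≤ mixedPow S V U :=
  piKronecker_nonneg fun i =>
    S.piecewise_cases (fun _ => V) (fun _ => U) (0 ≤ ·) (i := i) hV hU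

lemma pow_smul_nonlocalPart_le [Finite κ] (hV : 0 ≤ V) (hU : 0 ≤ U) {w : 𝕜} (hw : 1 ≤ w)
    (k : ℕ) :
    w ^ k • nonlocalPart ι k V U ≤ piKronecker fun _ => w • V + U := by
  have := Fintype.ofFinite κ
  have hw0 : 0 ≤ w := zero_le_one.trans hw
  rw [piKronecker_const_add, nonlocalPart, Finset.smul_sum]
  calc ∑ S : Finset ι with k ≤ S.card, w ^ k • mixedPow S V U
      ≤ ∑ S : Finset ι with k ≤ S.card, mixedPow S (w • V) U := by
        refine Finset.sum_le_sum fun S hS => ?_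
        rw [mixedPow_smul_left]
        exact smul_le_smul_of_nonneg_right (pow_le_pow_right₀ hw (Finset.mem_filter.mp hS).2)
          (mixedPow_nonneg hV hU S)
    _ ≤ ∑ S : Finset ι, mixedPow S (w • V) U :=
        Finset.sum_le_sum_of_subset_of_nonneg (Finset.filter_subset _ _) fun S _ _ =>
          mixedPow_nonneg (smul_nonneg hw0 hV) hU S

lemma pow_smul_conjTranspose_nonlocalPart_mul_mul_le [Fintype κ] (hG : 0 ≤ G)
    (hUV : Uᴴ * G * V = 0) {w : 𝕜} (hw : 1 ≤ w) (hH : w • (Vᴴ * G * V) + Uᴴ * G * U ≤ H) (k : ℕ) :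
    w ^ k • ((nonlocalPart ι k V U)ᴴ * piKronecker (fun _ => G) * nonlocalPart ι k V U)
      ≤ piKronecker fun _ => H := by
  have hV : 0 ≤ Vᴴ * G * V := star_left_conjugate_nonneg hG V
  have hU : 0 ≤ Uᴴ * G * U := star_left_conjugate_nonneg hG U
  have hsum : 0 ≤ w • (Vᴴ * G * V) + Uᴴ * G * U :=
    add_nonneg (smul_nonneg (zero_le_one.trans hw) hV) hU
  rw [conjTranspose_nonlocalPart_mul_mul_nonlocalPart (nonneg_iff_posSemidef.mp hG).isHermitian hUV]
  exact (pow_smul_nonlocalPart_le hV hU hw k).trans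
    (piKronecker_mono (fun _ => hsum) fun _ => hH)

end Order

end MixedPow

section Contraction

open scoped MatrixOrder

variable {ι κ 𝕜 : Type*} [Fintype κ] [RCLike 𝕜] {E G H U V : Matrix κ κ 𝕜}

lemma mul_re_dotProduct_mulVec_le (hG : 0 ≤ G) {w : 𝕜} (hw : 0 ≤ w) {u a : κ → 𝕜}
    (hu : w * (star u ⬝ᵥ G *ᵥ u) ≤ RCLike.re (star u ⬝ᵥ G *ᵥ a)) :
    w * RCLike.re (star u ⬝ᵥ G *ᵥ a) ≤ star a ⬝ᵥ G *ᵥ a := by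
  have hre : 2 * (RCLike.re (star u ⬝ᵥ G *ᵥ a) : 𝕜)
      = star u ⬝ᵥ G *ᵥ a + star a ⬝ᵥ G *ᵥ u := by
    rw [← RCLike.add_conj, starRingEnd_apply, star_dotProduct, star_star, star_mulVec,
      (nonneg_iff_posSemidef.mp hG).isHermitian.eq, ← dotProduct_mulVec]
  have hsq : 0 ≤ star (w • u - a) ⬝ᵥ G *ᵥ (w • u - a) :=
    (nonneg_iff_posSemidef.mp hG).dotProduct_mulVec_nonneg _
  have hexpand : star (w • u - a) ⬝ᵥ G *ᵥ (w • u - a) = w * (w * (star u ⬝ᵥ G *ᵥ u))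
      - 2 * (w * RCLike.re (star u ⬝ᵥ G *ᵥ a)) + star a ⬝ᵥ G *ᵥ a := by
    simp only [star_sub, star_smul, (IsSelfAdjoint.of_nonneg hw).star_eq, mulVec_sub, mulVec_smul,
      sub_dotProduct, dotProduct_sub, smul_dotProduct, dotProduct_smul, smul_eq_mul]
    linear_combination w * hre
  have hwu := mul_le_mul_of_nonneg_left hu hw
  linear_combination hsq + hwu + hexpand

lemma smul_sub_mul_mul_le {m : 𝕜} (hm : 0 ≤ m) (hE : 0 ≤ E) (hG : 0 ≤ G) (hH : 0 ≤ H)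
    (hGH : m • G ≤ H) (hEGE : E * G * E = E) (hEHE : E * H * E = E) :
    m • (G - G * E * G) ≤ H - H * E * H := by
  classical
  have hEs : Eᴴ = E := (nonneg_iff_posSemidef.mp hE).isHermitian
  have hGs : Gᴴ = G := (nonneg_iff_posSemidef.mp hG).isHermitian
  have hHs : Hᴴ = H := (nonneg_iff_posSemidef.mp hH).isHermitian
  have hEG (X : Matrix κ κ 𝕜) : E * (G * (E * X)) = E * X := by
    simp only [← Matrix.mul_assoc, hEGE]
  have hEH (X : Matrix κ κ 𝕜) : E * (H * (E * X)) = E * X := by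
    simp only [← Matrix.mul_assoc, hEHE]
  -- `1 - E * H` subtracts the `H`-mean, and the variance in `G` is least about the `G`-mean.
  have hvar : (1 - E * H)ᴴ * G * (1 - E * H) = G - G * E * G + (H - G)ᴴ * E * (H - G) := by
    simp only [conjTranspose_sub, conjTranspose_one, conjTranspose_mul, hEs, hGs, hHs]
    noncomm_ring [hEG]
  calc m • (G - G * E * G)
      ≤ m • ((1 - E * H)ᴴ * G * (1 - E * H)) := by
        rw [hvar]
        exact smul_le_smul_of_nonneg_left
          (le_add_of_nonneg_right (star_left_conjugate_nonneg hE (H - G))) hm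
    _ = (1 - E * H)ᴴ * (m • G) * (1 - E * H) := by
        rw [Matrix.mul_smul, Matrix.smul_mul]
    _ ≤ (1 - E * H)ᴴ * H * (1 - E * H) := star_left_conjugate_le_conjugate hGH _
    _ = H - H * E * H := by
        simp only [conjTranspose_sub, conjTranspose_one, conjTranspose_mul, hEs, hHs]
        noncomm_ring [hEH]

lemma conjTranspose_mul_mul_smul_one_sub_mul [DecidableEq κ] (hE : E.IsHermitian)
    (hH : H.IsHermitian) (hEGE : E * G * E = E) (t : 𝕜) :
    (E * H)ᴴ * G * (t • (1 - E * G)) = 0 := by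
  rw [conjTranspose_mul, hE.eq, hH.eq, Matrix.mul_smul, Matrix.mul_sub, Matrix.mul_one,
    ← Matrix.mul_assoc, Matrix.mul_assoc H E G, Matrix.mul_assoc H (E * G) E, hEGE,
    Matrix.mul_assoc, sub_self, smul_zero]

lemma smul_conjTranspose_mul_mul_add_le [DecidableEq κ] (hE : 0 ≤ E) (hG : 0 ≤ G) (hH : 0 ≤ H)
    {w t : 𝕜} (ht : IsSelfAdjoint t) (hw : 0 ≤ w * t ^ 2) (hGH : (w * t ^ 2) • G ≤ H)
    (hEGE : E * G * E = E) (hEHE : E * H * E = E) :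
    w • ((t • (1 - E * G))ᴴ * G * (t • (1 - E * G))) + (E * H)ᴴ * G * (E * H) ≤ H := by
  have hEs : Eᴴ = E := (nonneg_iff_posSemidef.mp hE).isHermitian
  have hGs : Gᴴ = G := (nonneg_iff_posSemidef.mp hG).isHermitian
  have hHs : Hᴴ = H := (nonneg_iff_posSemidef.mp hH).isHermitian
  have hEG (X : Matrix κ κ 𝕜) : E * (G * (E * X)) = E * X := by
    simp only [← Matrix.mul_assoc, hEGE]
  have hV : w • ((t • (1 - E * G))ᴴ * G * (t • (1 - E * G)))
      = (w * t ^ 2) • (G - G * E * G) := by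
    simp only [conjTranspose_smul, conjTranspose_sub, conjTranspose_one, conjTranspose_mul, hEs,
      hGs, ht.star_eq, Matrix.smul_mul, Matrix.mul_smul, smul_smul, mul_assoc, pow_two]
    congr 1
    noncomm_ring [hEG]
  have hU : (E * H)ᴴ * G * (E * H) = H * E * H := by
    simp only [conjTranspose_mul, hEs, hHs, Matrix.mul_assoc, hEG]
  rw [hV, hU]
  exact le_sub_iff_add_le.mp (smul_sub_mul_mul_le hw hE hG hH hGH hEGE hEHE)

variable [Fintype ι] [DecidableEq ι]

theorem pow_mul_dotProduct_mulVec_le_of_orthogonal (hG : 0 ≤ G) (hUV : Uᴴ * G * V = 0)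
    {w : 𝕜} (hw : 1 ≤ w) (hH : w • (Vᴴ * G * V) + Uᴴ * G * U ≤ H)
    {k : ℕ} {a b : (ι → κ) → 𝕜}
    (horth : ∀ S : Finset ι, S.card < k →
      star (mixedPow S V U *ᵥ b) ⬝ᵥ piKronecker (fun _ => G) *ᵥ a = 0)
    (hb : star b ⬝ᵥ piKronecker (fun _ => H) *ᵥ b = RCLike.re
      (star (piKronecker (fun _ => V + U) *ᵥ b) ⬝ᵥ piKronecker (fun _ => G) *ᵥ a)) :
    w ^ k * (star b ⬝ᵥ piKronecker (fun _ => H) *ᵥ b)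
      ≤ star a ⬝ᵥ piKronecker (fun _ => G) *ᵥ a := by
  have hnonlocal : star (piKronecker (fun _ => V + U) *ᵥ b) ⬝ᵥ piKronecker (fun _ => G) *ᵥ a
      = star (nonlocalPart ι k V U *ᵥ b) ⬝ᵥ piKronecker (fun _ => G) *ᵥ a := by
    simp only [piKronecker_const_add, nonlocalPart, sum_mulVec, star_sum, sum_dotProduct]
    refine (Finset.sum_filter_of_ne fun S _ hS => ?_).symm
    exact not_lt.mp fun hlt => hS (horth S hlt)
  have hle := PosSemidef.dotProduct_mulVec_nonneg
    (pow_smul_conjTranspose_nonlocalPart_mul_mul_le hG hUV hw hH k) b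
  rw [sub_mulVec, dotProduct_sub, sub_nonneg, smul_mulVec, dotProduct_smul] at hle
  rw [hnonlocal] at hb
  rw [hb] at hle ⊢
  refine mul_re_dotProduct_mulVec_le (piKronecker_nonneg fun _ => hG)
    (pow_nonneg (zero_le_one.trans hw) k) ?_
  simpa only [star_mulVec, ← dotProduct_mulVec, mulVec_mulVec, smul_eq_mul, Matrix.mul_assoc]
    using hle

end Contraction

section Vectorization

variable {ι m R : Type*}

/-- Vectorization of a multi-site matrix in which each site contributes its own (column, row) pair,
so that it turns tensor products of channels into `piKronecker`s acting on vectors. The order of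
the pair is that of `Matrix.vec`. -/
def siteVec [Semiring R] : Matrix (ι → m) (ι → m) R →ₗ[R] (ι → m × m) → R where
  toFun M p := M (fun i => (p i).2) fun i => (p i).1
  map_add' _ _ := rfl
  map_smul' _ _ := rfl

variable [Fintype ι]

lemma siteVec_piKronecker [CommSemiring R] (a : ι → Matrix m m R) :
    siteVec (piKronecker a) = fun p => ∏ i, vec (a i) (p i) :=
  rfl

lemma span_range_piKronecker [CommSemiring R] [Finite m] :
    Submodule.span R (Set.range (piKronecker : (ι → Matrix m m R) → _)) = ⊤ := by
  classical
  have := Fintype.ofFinite m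
  refine eq_top_iff.mpr fun M _ => ?_
  rw [matrix_eq_sum_single M]
  refine Submodule.sum_mem _ fun x _ => Submodule.sum_mem _ fun z _ => ?_
  have hsingle : piKronecker (fun i => single (x i) (z i) (1 : R)) = single x z 1 := by
    ext p q
    simp only [piKronecker, of_apply, single_apply, Finset.prod_ite_zero, Finset.mem_univ,
      true_imp_iff, Finset.prod_const_one, funext_iff, forall_and]
  rw [← mul_one (M x z), ← smul_eq_mul, ← smul_single, ← hsingle]
  exact Submodule.smul_mem _ _ (Submodule.subset_span ⟨_, rfl⟩)

variable [DecidableEq ι] [Fintype m]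

lemma star_siteVec_dotProduct_siteVec [CommSemiring R] [StarRing R]
    (A B : Matrix (ι → m) (ι → m) R) :
    star (siteVec A) ⬝ᵥ siteVec B = (Aᴴ * B).trace := by
  rw [← star_vec_dotProduct_vec]
  exact Fintype.sum_equiv (Equiv.arrowProdEquivProdArrow ι (fun _ => m) fun _ => m) _ _
    fun _ => rfl

variable [CommSemiring R]

lemma piKronecker_mulVec_siteVec_piKronecker {F : ι → Matrix (m × m) (m × m) R}
    {a b : ι → Matrix m m R} (h : ∀ i, F i *ᵥ vec (a i) = vec (b i)) :
    piKronecker F *ᵥ siteVec (piKronecker a) = siteVec (piKronecker b) := by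
  simp only [siteVec_piKronecker, piKronecker_mulVec_prod, h]

lemma siteVec_apply_eq_piKronecker_mulVec
    {f : Matrix (ι → m) (ι → m) R →ₗ[R] Matrix (ι → m) (ι → m) R}
    {φ : ι → Matrix m m R → Matrix m m R} {F : ι → Matrix (m × m) (m × m) R}
    (hF : ∀ i a, F i *ᵥ vec a = vec (φ i a))
    (hf : ∀ a, f (piKronecker a) = piKronecker fun i => φ i (a i))
    (M : Matrix (ι → m) (ι → m) R) :
    siteVec (f M) = piKronecker F *ᵥ siteVec M := by
  refine LinearMap.congr_fun (f := siteVec ∘ₗ f) (g := (piKronecker F).mulVecLin ∘ₗ siteVec)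
    (LinearMap.ext_on_range span_range_piKronecker fun a => ?_) M
  exact (congrArg siteVec (hf a)).trans
    (piKronecker_mulVec_siteVec_piKronecker fun i => hF i (a i)).symm

end Vectorization

section SiteGram

open scoped Kronecker

variable {ι m R : Type*} [DecidableEq m]

/-- The Gram matrix of the form `(A, B) ↦ Tr (ρ A† B)` on vectorized matrices. -/
def siteGram [CommSemiring R] (ρ : Matrix m m R) : Matrix (m × m) (m × m) R :=
  ρᵀ ⊗ₖ 1

/-- The rank-one matrix of the form `(A, B) ↦ conj (Tr A) * Tr B` on vectorized matrices. -/
def traceGram (m R : Type*) [DecidableEq m] [CommSemiring R] [StarRing R] :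
    Matrix (m × m) (m × m) R :=
  vecMulVec (vec 1) (star (vec 1))

section Linear

variable [CommSemiring R]

lemma siteGram_add (ρ σ : Matrix m m R) : siteGram (ρ + σ) = siteGram ρ + siteGram σ := by
  rw [siteGram, transpose_add, add_kronecker, siteGram, siteGram]

lemma siteGram_smul (c : R) (ρ : Matrix m m R) : siteGram (c • ρ) = c • siteGram ρ := by
  rw [siteGram, transpose_smul, smul_kronecker, siteGram]

lemma siteGram_one : siteGram (1 : Matrix m m R) = 1 := by
  rw [siteGram, transpose_one, one_kronecker_one]

end Linear

variable [Fintype m] [CommSemiring R]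

lemma siteGram_mulVec_vec (ρ A : Matrix m m R) : siteGram ρ *ᵥ vec A = vec (A * ρ) := by
  rw [siteGram, kronecker_mulVec_vec, Matrix.one_mul, transpose_transpose]

lemma piKronecker_siteGram_mulVec_siteVec [Fintype ι] [DecidableEq ι] (ρ : ι → Matrix m m R)
    (A : Matrix (ι → m) (ι → m) R) :
    piKronecker (fun i => siteGram (ρ i)) *ᵥ siteVec A = siteVec (A * piKronecker ρ) :=
  (siteVec_apply_eq_piKronecker_mulVec (f := LinearMap.mulRight R (piKronecker ρ))
    (fun i a => siteGram_mulVec_vec (ρ i) a) (fun a => (piKronecker_mul a ρ).symm) A).symm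

variable [StarRing R]

lemma traceGram_mulVec_vec (A : Matrix m m R) :
    traceGram m R *ᵥ vec A = A.trace • vec 1 := by
  rw [traceGram, vecMulVec_mulVec, star_vec_dotProduct_vec, conjTranspose_one, Matrix.one_mul,
    op_smul_eq_smul]

lemma traceGram_mul_siteGram_mul_traceGram (ρ : Matrix m m R) :
    traceGram m R * siteGram ρ * traceGram m R = ρ.trace • traceGram m R := by
  rw [Matrix.mul_assoc]
  nth_rw 2 [traceGram]
  rw [mul_vecMulVec, siteGram_mulVec_vec, mul_vecMulVec, Matrix.one_mul, traceGram_mulVec_vec,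
    smul_vecMulVec, ← traceGram]

lemma traceGram_mul_siteGram_mulVec_vec (ρ A : Matrix m m R) :
    (traceGram m R * siteGram ρ) *ᵥ vec A = (A * ρ).trace • vec 1 := by
  rw [← mulVec_mulVec, siteGram_mulVec_vec, traceGram_mulVec_vec]

end SiteGram

section SiteGramOrder

open scoped Kronecker MatrixOrder

variable {m 𝕜 : Type*} [DecidableEq m] [RCLike 𝕜]

lemma traceGram_nonneg [Finite m] : 0 ≤ traceGram m 𝕜 :=
  (posSemidef_vecMulVec_self_star _).nonneg

lemma siteGram_nonneg [Finite m] {ρ : Matrix m m 𝕜} (hρ : 0 ≤ ρ) : 0 ≤ siteGram ρ := by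
  have := Fintype.ofFinite m
  exact ((nonneg_iff_posSemidef.mp hρ).transpose.kronecker .one).nonneg

lemma siteGram_mono [Finite m] {ρ σ : Matrix m m 𝕜} (h : ρ ≤ σ) : siteGram ρ ≤ siteGram σ := by
  rw [← add_sub_cancel ρ σ, siteGram_add]
  exact le_add_of_nonneg_right (siteGram_nonneg (sub_nonneg.mpr h))

lemma le_trace_smul_one [Fintype m] {ρ : Matrix m m 𝕜} (hρ : 0 ≤ ρ) : ρ ≤ ρ.trace • 1 := by
  have hpos := nonneg_iff_posSemidef.mp hρ
  have htrace : ρ.trace = ((∑ i, hpos.isHermitian.eigenvalues i : ℝ) : 𝕜) := by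
    rw [hpos.isHermitian.trace_eq_sum_eigenvalues, RCLike.ofReal_sum]
  have hle : ρ ≤ algebraMap ℝ _ (∑ i, hpos.isHermitian.eigenvalues i) := by
    refine le_algebraMap_of_spectrum_le (fun x hx => ?_) hpos.isHermitian.isSelfAdjoint
    rw [hpos.isHermitian.spectrum_real_eq_range_eigenvalues] at hx
    obtain ⟨i, rfl⟩ := hx
    exact Finset.single_le_sum (fun j _ => hpos.eigenvalues_nonneg j) (Finset.mem_univ i)
  rwa [Algebra.algebraMap_eq_smul_one, RCLike.real_smul_eq_coe_smul (K := 𝕜), ← htrace] at hle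

end SiteGramOrder

section Channel

/-- The depolarizing channel `D_y` on a single site. -/
def depol (d : ℕ) (y : ℝ) (X : Matrix (Fin d) (Fin d) ℂ) : Matrix (Fin d) (Fin d) ℂ :=
  ((y⁻¹ : ℝ) : ℂ) • X + (((1 - y⁻¹ : ℝ) : ℂ) / d * X.trace) • 1

variable {d n : ℕ} (y : ℝ)

lemma isLinearMap_depolSite (i : Fin n) : IsLinearMap ℂ (depolSite d n y i) where
  map_add M N := by
    ext x z
    simp only [depolSite, Matrix.add_apply, Finset.sum_add_distrib]
    split_ifs <;> ring
  map_smul c M := by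
    ext x z
    simp only [depolSite, Matrix.smul_apply, smul_eq_mul, ← Finset.mul_sum]
    split_ifs <;> ring

lemma depolSite_conjTranspose (i : Fin n) (M : Matrix (Fin n → Fin d) (Fin n → Fin d) ℂ) :
    depolSite d n y i Mᴴ = (depolSite d n y i M)ᴴ := by
  ext x z
  simp only [depolSite, conjTranspose_apply, star_add, star_mul', star_div₀, star_natCast,
    apply_ite star, star_sum, star_zero, eq_comm (a := x i), Complex.star_def, Complex.conj_ofReal]

lemma depolSite_piKronecker (i : Fin n) (a : Fin n → Matrix (Fin d) (Fin d) ℂ) :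
    depolSite d n y i (piKronecker a) = piKronecker (Function.update a i (depol d y (a i))) := by
  ext x z
  have hsplit (b : Fin n → Matrix (Fin d) (Fin d) ℂ) (p q : Fin n → Fin d) :
      piKronecker b p q = b i (p i) (q i) * ∏ j ∈ Finset.univ.erase i, b j (p j) (q j) :=
    (Finset.mul_prod_erase _ _ (Finset.mem_univ i)).symm
  have hrest (c : Fin d) : ∏ j ∈ Finset.univ.erase i,
      a j (Function.update x i c j) (Function.update z i c j)
        = ∏ j ∈ Finset.univ.erase i, a j (x j) (z j) :=
    Finset.prod_congr rfl fun j hj => by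
      simp only [Function.update_of_ne (Finset.ne_of_mem_erase hj)]
  have hrest' : ∏ j ∈ Finset.univ.erase i, Function.update a i (depol d y (a i)) j (x j) (z j)
      = ∏ j ∈ Finset.univ.erase i, a j (x j) (z j) :=
    Finset.prod_congr rfl fun j hj => by rw [Function.update_of_ne (Finset.ne_of_mem_erase hj)]
  simp only [depolSite, hsplit, hrest, hrest', Function.update_self, ← Finset.sum_mul]
  simp only [depol, Matrix.add_apply, Matrix.smul_apply, one_apply, trace, diag_apply, smul_eq_mul]
  split_ifs <;> ring

lemma isLinearMap_depolPow : IsLinearMap ℂ (depolPow d n y) :=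
  List.foldrRecOn _ _ LinearMap.id.isLinear fun _ hf i _ =>
    ((isLinearMap_depolSite y i).mk' _ ∘ₗ hf.mk' _).isLinear

lemma depolPow_conjTranspose (M : Matrix (Fin n → Fin d) (Fin n → Fin d) ℂ) :
    depolPow d n y Mᴴ = (depolPow d n y M)ᴴ :=
  List.foldrRecOn (motive := fun f : Matrix _ _ ℂ → Matrix _ _ ℂ => f Mᴴ = (f M)ᴴ) _ _ rfl
    fun _ hf i _ => (congrArg (depolSite d n y i) hf).trans (depolSite_conjTranspose y i _)

lemma depolPow_piKronecker (a : Fin n → Matrix (Fin d) (Fin d) ℂ) :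
    depolPow d n y (piKronecker a) = piKronecker fun i => depol d y (a i) := by
  have hlist (l : List (Fin n)) (hl : l.Nodup) :
      l.foldr (fun i f => depolSite d n y i ∘ f) id (piKronecker a)
        = piKronecker fun i => if i ∈ l then depol d y (a i) else a i := by
    induction l with
    | nil => simp
    | cons i l ih =>
      obtain ⟨hi, hl⟩ := List.nodup_cons.mp hl
      rw [List.foldr_cons, Function.comp_apply, ih hl, depolSite_piKronecker]
      refine congrArg piKronecker (funext fun j => ?_)
      by_cases hj : j = i
      · subst hj
        simp [hi]
      · simp [hj]
  simpa only [depolPow, List.mem_finRange, if_true] using hlist _ (List.nodup_finRange n)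

end Channel

section Depolarizing

open scoped MatrixOrder

variable {d n : ℕ} {y : ℝ} {ρ : Matrix (Fin d) (Fin d) ℂ}

/-- The matrix of the depolarizing channel `D_y` on vectorized single-site matrices. -/
def depolMatrix (d : ℕ) (y : ℝ) : Matrix (Fin d × Fin d) (Fin d × Fin d) ℂ :=
  ((y⁻¹ : ℝ) : ℂ) • 1 + (((1 - y⁻¹ : ℝ) : ℂ) / d) • traceGram (Fin d) ℂ

/-- The map `X ↦ y⁻¹ (X - Tr (ρ X))` on vectorized single-site matrices. Its range is orthogonal to
the scalars in the form `Tr (ρ A† B)`. -/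
def fluctuationMatrix (y : ℝ) (ρ : Matrix (Fin d) (Fin d) ℂ) :
    Matrix (Fin d × Fin d) (Fin d × Fin d) ℂ :=
  ((y⁻¹ : ℝ) : ℂ) • (1 - traceGram (Fin d) ℂ * siteGram ρ)

/-- The map `X ↦ Tr (σ X)`, with scalar values, on vectorized single-site matrices. -/
def expectationMatrix (σ : Matrix (Fin d) (Fin d) ℂ) :
    Matrix (Fin d × Fin d) (Fin d × Fin d) ℂ :=
  traceGram (Fin d) ℂ * siteGram σ

lemma isHermitian_depolMatrix : (depolMatrix d y).IsHermitian := by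
  have htrace : (traceGram (Fin d) ℂ)ᴴ = traceGram (Fin d) ℂ :=
    (nonneg_iff_posSemidef.mp traceGram_nonneg).isHermitian
  simp only [IsHermitian, depolMatrix, conjTranspose_add, conjTranspose_smul, conjTranspose_one,
    htrace, star_div₀, star_natCast, Complex.star_def, Complex.conj_ofReal]

lemma depolMatrix_mulVec_vec (X : Matrix (Fin d) (Fin d) ℂ) :
    depolMatrix d y *ᵥ vec X = vec (depol d y X) := by
  rw [depolMatrix, add_mulVec, smul_mulVec, smul_mulVec, one_mulVec, traceGram_mulVec_vec, depol,
    vec_add, vec_smul, vec_smul, smul_smul]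

lemma siteVec_depolPow (M : Matrix (Fin n → Fin d) (Fin n → Fin d) ℂ) :
    siteVec (depolPow d n y M) = piKronecker (fun _ => depolMatrix d y) *ᵥ siteVec M :=
  siteVec_apply_eq_piKronecker_mulVec (f := (isLinearMap_depolPow y).mk')
    (fun _ => depolMatrix_mulVec_vec) (depolPow_piKronecker y) M

lemma trace_depolPow_mul (M N : Matrix (Fin n → Fin d) (Fin n → Fin d) ℂ) :
    (depolPow d n y M * N).trace = (M * depolPow d n y N).trace := by
  have hD : (piKronecker fun _ : Fin n => depolMatrix d y)ᴴ
      = piKronecker fun _ => depolMatrix d y := by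
    rw [conjTranspose_piKronecker, isHermitian_depolMatrix]
  calc (depolPow d n y M * N).trace
      = star (siteVec (depolPow d n y Mᴴ)) ⬝ᵥ siteVec N := by
        rw [star_siteVec_dotProduct_siteVec, depolPow_conjTranspose, conjTranspose_conjTranspose]
    _ = star (siteVec Mᴴ) ⬝ᵥ siteVec (depolPow d n y N) := by
        rw [siteVec_depolPow, siteVec_depolPow, star_mulVec, hD, dotProduct_mulVec]
    _ = (M * depolPow d n y N).trace := by
        rw [star_siteVec_dotProduct_siteVec, conjTranspose_conjTranspose]

lemma depol_of_trace_eq_one (hρ : ρ.trace = 1) :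
    depol d y ρ = ((y⁻¹ : ℝ) : ℂ) • ρ + (((1 - y⁻¹ : ℝ) : ℂ) / d) • 1 := by
  rw [depol, hρ, mul_one]

lemma trace_depol (hd : d ≠ 0) (X : Matrix (Fin d) (Fin d) ℂ) :
    (depol d y X).trace = X.trace := by
  have hd' : (d : ℂ) ≠ 0 := Nat.cast_ne_zero.mpr hd
  rw [depol, trace_add, trace_smul, trace_smul, trace_one, Fintype.card_fin, smul_eq_mul,
    smul_eq_mul]
  push_cast
  field_simp
  ring

lemma fluctuationMatrix_add_expectationMatrix (hρ : ρ.trace = 1) :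
    fluctuationMatrix y ρ + expectationMatrix (depol d y ρ) = depolMatrix d y := by
  rw [fluctuationMatrix, expectationMatrix, depolMatrix, depol_of_trace_eq_one hρ, siteGram_add,
    siteGram_smul, siteGram_smul, siteGram_one, Matrix.mul_add, Matrix.mul_smul, Matrix.mul_smul,
    Matrix.mul_one]
  module

lemma fluctuationMatrix_mulVec_vec (X : Matrix (Fin d) (Fin d) ℂ) :
    fluctuationMatrix y ρ *ᵥ vec X = vec (((y⁻¹ : ℝ) : ℂ) • (X - (X * ρ).trace • 1)) := by
  rw [fluctuationMatrix, smul_mulVec, sub_mulVec, one_mulVec, traceGram_mul_siteGram_mulVec_vec,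
    vec_smul, vec_sub, vec_smul]

lemma mixedPow_mulVec_siteVec_mem_map_TS (hρ : ρ.trace = 1) (σ : Matrix (Fin d) (Fin d) ℂ)
    (S : Finset (Fin n)) (M : Matrix (Fin n → Fin d) (Fin n → Fin d) ℂ) :
    mixedPow S (fluctuationMatrix y ρ) (expectationMatrix σ) *ᵥ siteVec M
      ∈ (TS d n ρ S).map siteVec := by
  suffices h : ⊤ ≤ ((TS d n ρ S).map siteVec).comap
      ((mixedPow S (fluctuationMatrix y ρ) (expectationMatrix σ)).mulVecLin ∘ₗ siteVec) from
    h (Submodule.mem_top (x := M))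
  rw [← span_range_piKronecker, Submodule.span_le]
  rintro _ ⟨a, rfl⟩
  let b (i : Fin n) : Matrix (Fin d) (Fin d) ℂ :=
    if i ∈ S then ((y⁻¹ : ℝ) : ℂ) • (a i - (a i * ρ).trace • 1) else 1
  let c (i : Fin n) : ℂ := if i ∈ S then 1 else (a i * σ).trace
  have himage : mixedPow S (fluctuationMatrix y ρ) (expectationMatrix σ) *ᵥ siteVec (piKronecker a)
      = siteVec ((∏ i, c i) • piKronecker b) := by
    rw [← piKronecker_smul]
    refine piKronecker_mulVec_siteVec_piKronecker fun i => ?_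
    by_cases hi : i ∈ S
    · simp only [b, c, hi, if_true, one_smul, Finset.piecewise_eq_of_mem,
        fluctuationMatrix_mulVec_vec]
    · simp only [b, c, hi, if_false, not_false_eq_true, Finset.piecewise_eq_of_notMem,
        expectationMatrix, traceGram_mul_siteGram_mulVec_vec, vec_smul]
  have hb : piKronecker b ∈ TS d n ρ S := by
    refine Submodule.subset_span ⟨b, fun i hi => ?_, fun i hi => if_neg hi, rfl⟩
    simp only [b, hi, if_true, Matrix.mul_smul, Matrix.mul_sub, trace_smul, trace_sub, hρ,
      trace_mul_comm ρ, smul_eq_mul, mul_one, sub_self, mul_zero]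
  exact ⟨_, Submodule.smul_mem _ _ hb, himage.symm⟩

lemma ne_zero_of_trace_eq_one (hρ : ρ.trace = 1) : d ≠ 0 := by
  rintro rfl
  exact zero_ne_one ((trace_fin_zero ρ).symm.trans hρ)

lemma one_sub_inv_div_nonneg (d : ℕ) (hy : 1 ≤ y) : 0 ≤ (((1 - y⁻¹) / d : ℝ) : ℂ) :=
  Complex.zero_le_real.mpr (div_nonneg (sub_nonneg.mpr (inv_le_one_of_one_le₀ hy)) d.cast_nonneg)

lemma smul_le_depol (hρ : 0 ≤ ρ) (hρtr : ρ.trace = 1) (hy : 1 ≤ y) :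
    (((1 - y⁻¹) / d : ℝ) : ℂ) • ρ ≤ depol d y ρ := by
  have hle : ρ ≤ 1 := by simpa only [hρtr, one_smul] using le_trace_smul_one hρ
  have ht : 0 ≤ ((y⁻¹ : ℝ) : ℂ) := Complex.zero_le_real.mpr (by positivity)
  rw [depol_of_trace_eq_one hρtr, ← Complex.ofReal_natCast, ← Complex.ofReal_div]
  exact (smul_le_smul_of_nonneg_left hle (one_sub_inv_div_nonneg d hy)).trans
    (le_add_of_nonneg_left (smul_nonneg ht hρ))

lemma depol_nonneg (hρ : 0 ≤ ρ) (hρtr : ρ.trace = 1) (hy : 1 ≤ y) : 0 ≤ depol d y ρ :=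
  (smul_nonneg (one_sub_inv_div_nonneg d hy) hρ).trans (smul_le_depol hρ hρtr hy)

lemma siteGram_depol_le (hρ : 0 ≤ ρ) (hρtr : ρ.trace = 1) (hy : 1 ≤ y) :
    ((y * (y - 1) / d : ℝ) : ℂ)
        • ((fluctuationMatrix y ρ)ᴴ * siteGram ρ * fluctuationMatrix y ρ)
      + (expectationMatrix (depol d y ρ))ᴴ * siteGram ρ * expectationMatrix (depol d y ρ)
      ≤ siteGram (depol d y ρ) := by
  have hd := ne_zero_of_trace_eq_one hρtr
  have hm : ((y * (y - 1) / d : ℝ) : ℂ) * ((y⁻¹ : ℝ) : ℂ) ^ 2 = (((1 - y⁻¹) / d : ℝ) : ℂ) := by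
    norm_cast
    field_simp
  refine smul_conjTranspose_mul_mul_add_le traceGram_nonneg (siteGram_nonneg hρ)
    (siteGram_nonneg (depol_nonneg hρ hρtr hy)) (Complex.conj_ofReal _)
    (hm ▸ one_sub_inv_div_nonneg d hy) ?_ ?_ ?_
  · rw [hm, ← siteGram_smul]
    exact siteGram_mono (smul_le_depol hρ hρtr hy)
  · rw [traceGram_mul_siteGram_mul_traceGram, hρtr, one_smul]
  · rw [traceGram_mul_siteGram_mul_traceGram, trace_depol hd, hρtr, one_smul]

lemma conjTranspose_expectationMatrix_mul_fluctuationMatrix (hρ : ρ.trace = 1)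
    {σ : Matrix (Fin d) (Fin d) ℂ} (hσ : 0 ≤ σ) :
    (expectationMatrix σ)ᴴ * siteGram ρ * fluctuationMatrix y ρ = 0 :=
  conjTranspose_mul_mul_smul_one_sub_mul (nonneg_iff_posSemidef.mp traceGram_nonneg).isHermitian
    (nonneg_iff_posSemidef.mp (siteGram_nonneg hσ)).isHermitian
    (by rw [traceGram_mul_siteGram_mul_traceGram, hρ, one_smul]) _

theorem pow_mul_trace_le_of_orthogonal_TS (hρ : 0 ≤ ρ) (hρtr : ρ.trace = 1) (hy : 1 ≤ y)
    (hyd : d ≤ y * (y - 1)) {k : ℕ} {A B : Matrix (Fin n → Fin d) (Fin n → Fin d) ℂ}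
    (horth : ∀ S : Finset (Fin n), S.card < k → ∀ C ∈ TS d n ρ S,
      (Cᴴ * (A * tensorPow d n ρ)).trace = 0)
    (hB : (Bᴴ * (B * tensorPow d n (depol d y ρ))).trace
      = ((depolPow d n y B)ᴴ * (A * tensorPow d n ρ)).trace.re) :
    ((y * (y - 1) / d : ℝ) : ℂ) ^ k * (Bᴴ * (B * tensorPow d n (depol d y ρ))).trace
      ≤ (Aᴴ * (A * tensorPow d n ρ)).trace := by
  have hw : 1 ≤ ((y * (y - 1) / d : ℝ) : ℂ) := by
    have hd : (0 : ℝ) < d := Nat.cast_pos.mpr (ne_zero_of_trace_eq_one hρtr).pos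
    rw [← Complex.ofReal_one, Complex.real_le_real]
    exact (one_le_div hd).mpr hyd
  have hgram (τ : Matrix (Fin d) (Fin d) ℂ) (M N : Matrix (Fin n → Fin d) (Fin n → Fin d) ℂ) :
      (Mᴴ * (N * tensorPow d n τ)).trace
        = star (siteVec M) ⬝ᵥ piKronecker (fun _ => siteGram τ) *ᵥ siteVec N := by
    rw [piKronecker_siteGram_mulVec_siteVec, star_siteVec_dotProduct_siteVec]
    rfl
  rw [hgram, hgram]
  refine pow_mul_dotProduct_mulVec_le_of_orthogonal (siteGram_nonneg hρ)
    (conjTranspose_expectationMatrix_mul_fluctuationMatrix hρtr (depol_nonneg hρ hρtr hy)) hw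
    (siteGram_depol_le hρ hρtr hy) (fun S hS => ?_) ?_
  · obtain ⟨C, hC, hCS⟩ := mixedPow_mulVec_siteVec_mem_map_TS (y := y) hρtr (depol d y ρ) S B
    rw [← hCS, ← hgram, horth S hS C hC]
  · rw [← hgram, hB, hgram, siteVec_depolPow, fluctuationMatrix_add_expectationMatrix hρtr]
    rfl

end Depolarizing

section Omega

variable {m : Type*} [Fintype m]

lemma trace_Omega_mul (σ A C : Matrix m m ℂ) :
    (Omega σ A * C).trace = ((C * (σ * A)).trace + (C * (A * σ)).trace) / 2 := by
  rw [trace_mul_comm, Omega, Matrix.mul_smul, Matrix.mul_add, trace_smul, trace_add, smul_eq_mul,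
    one_div_mul_eq_div]

lemma trace_Omega_mul_self (σ B : Matrix m m ℂ) :
    (Omega σ B * B).trace = (B * (B * σ)).trace := by
  rw [trace_Omega_mul, ← Matrix.mul_assoc B σ B, trace_mul_comm (B * σ) B, add_self_div_two]

lemma trace_Omega_mul_eq_re {σ A C : Matrix m m ℂ} (hσ : σ.IsHermitian) (hA : A.IsHermitian)
    (hC : C.IsHermitian) :
    (Omega σ A * C).trace = (C * (A * σ)).trace.re := by
  have hconj : (C * (σ * A)).trace = star (C * (A * σ)).trace := by
    rw [← trace_conjTranspose, conjTranspose_mul, conjTranspose_mul, hσ, hA, hC, trace_mul_comm]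
  rw [trace_Omega_mul, hconj, add_comm, Complex.star_def, Complex.add_conj, Complex.ofReal_mul,
    Complex.ofReal_ofNat, mul_div_cancel_left₀ _ two_ne_zero]

end Omega

lemma contraction_factor_eq_inv_pow (d k : ℕ) {y : ℝ} (hy : y ≠ 0) :
    (d : ℝ) ^ k * y ^ (-(2 * (k : ℤ))) * (1 - y⁻¹) ^ (-(k : ℤ)) = ((y * (y - 1) / d) ^ k)⁻¹ := by
  have hfactor : y * (y - 1) / d = y ^ 2 * (1 - y⁻¹) / d := by field_simp
  rw [hfactor, div_pow, mul_pow, ← pow_mul, inv_div, _root_.zpow_neg, _root_.zpow_neg, zpow_natCast]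
  norm_cast
  rw [div_eq_mul_inv, mul_inv, mul_assoc]

/-- irrelevance of non-local operators: bound on the coarse-grained
Bures norm under `D_y^{⊗n}` for operators orthogonal to all `(k-1)`-local operators. -/
theorem nonlocal_contraction_bound
    (d n k : ℕ) (hd : 1 ≤ d) (hn : 1 ≤ n) (hk1 : 1 ≤ k) (hkn : k ≤ n)
    (ρ : Matrix (Fin d) (Fin d) ℂ) (hρ : ρ.PosSemidef) (hρtr : ρ.trace = 1)
    (y : ℝ) (hy : 1 < y) (hyd : y * (y - 1) > d)
    (A : Matrix (Fin n → Fin d) (Fin n → Fin d) ℂ) (hA : A.IsHermitian)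
    (horth : ∀ S : Finset (Fin n), S.card ≤ k - 1 →
      ∀ B ∈ TS d n ρ S, (tensorPow d n ρ * Bᴴ * A).trace = 0)
    (B : Matrix (Fin n → Fin d) (Fin n → Fin d) ℂ) (hB : B.IsHermitian)
    (hΩB : Omega (depolPow d n y (tensorPow d n ρ)) B
        = depolPow d n y (Omega (tensorPow d n ρ) A)) :
    (depolPow d n y (Omega (tensorPow d n ρ) A) * B).trace
      ≤ (((d : ℝ) ^ k * y ^ (-(2 * (k : ℤ))) * (1 - y⁻¹) ^ (-(k : ℤ)) : ℝ) : ℂ)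
        * (tensorPow d n ρ * A * A).trace := by
  have hρn : (tensorPow d n ρ).IsHermitian :=
    (conjTranspose_piKronecker _).trans (congrArg _ (funext fun _ => hρ.isHermitian))
  have hDB : (depolPow d n y B)ᴴ = depolPow d n y B := by rw [← depolPow_conjTranspose, hB]
  have hσ : depolPow d n y (tensorPow d n ρ) = tensorPow d n (depol d y ρ) :=
    depolPow_piKronecker y fun _ => ρ
  have hnorm : (depolPow d n y (Omega (tensorPow d n ρ) A) * B).trace
      = (Bᴴ * (B * tensorPow d n (depol d y ρ))).trace := by
    rw [← hΩB, hσ, trace_Omega_mul_self, hB]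
  have hdual : (depolPow d n y (Omega (tensorPow d n ρ) A) * B).trace
      = ((depolPow d n y B)ᴴ * (A * tensorPow d n ρ)).trace.re := by
    rw [trace_depolPow_mul, trace_Omega_mul_eq_re hρn hA hDB, hDB]
  have hbound := pow_mul_trace_le_of_orthogonal_TS (k := k) hρ.nonneg hρtr hy.le hyd.le
    (fun S hS C hC => by
      rw [← Matrix.mul_assoc, trace_mul_comm, ← Matrix.mul_assoc,
        horth S (Nat.le_sub_one_of_lt hS) C hC])
    (hnorm ▸ hdual)
  have hT : (tensorPow d n ρ * A * A).trace = (Aᴴ * (A * tensorPow d n ρ)).trace := by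
    rw [hA, Matrix.mul_assoc, trace_mul_comm, Matrix.mul_assoc]
  have hw : (0 : ℂ) < ((y * (y - 1) / d : ℝ) : ℂ) := Complex.zero_lt_real.mpr
    (div_pos (mul_pos (zero_lt_one.trans hy) (sub_pos.mpr hy)) (Nat.cast_pos.mpr hd))
  rw [hT, hnorm, contraction_factor_eq_inv_pow d k (zero_lt_one.trans hy).ne', Complex.ofReal_inv,
    Complex.ofReal_pow, le_inv_mul_iff₀ (pow_pos hw k)]
  exact hbound
end
end

section
/- Let ρ be a d×d complex density matrix and n ≥ 1. If Σ and Σ' are distinct subsets of {1,…,n}, then T_Σ and T_{Σ'} are orthogonal with respect to the GNS inner product at ρ^⊗n: for every A ∈ T_Σ and B ∈ T_{Σ'}, Tr(ρ^⊗n · A† · B) = 0. -/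
open scoped ComplexOrder
open Matrix

noncomputable section

/-! For product operators the GNS form at `ρ^{⊗n}` is the product over the sites of the
single-site forms `Tr(ρ aᵢ† bᵢ)`. At a site belonging to exactly one of `Σ`, `Σ'`, one of `aᵢ`, `bᵢ`
is the identity and the other is `ρ`-centred, so that factor vanishes. Sesquilinearity extends the
vanishing from the product operators to their spans. -/

section SesquilinearMap

variable {R S T M N P : Type*} [Semiring R] [Semiring S] [CommSemiring T]
  [AddCommMonoid M] [AddCommMonoid N] [AddCommMonoid P] [Module R M] [Module S N] [Module T P]
  {σ : R →+* T} {τ : S →+* T}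

theorem apply_apply_eq_zero_of_mem_span (f : M →ₛₗ[σ] N →ₛₗ[τ] P) {s : Set M} {t : Set N}
    (h : ∀ x ∈ s, ∀ y ∈ t, f x y = 0) {x : M} {y : N}
    (hx : x ∈ Submodule.span R s) (hy : y ∈ Submodule.span S t) : f x y = 0 :=
  have h_right : ∀ x ∈ s, f x y = 0 := fun x hx =>
    LinearMap.eqOn_span (f := f x) (g := 0) (h x hx) hy
  LinearMap.eqOn_span (f := f.flip y) (g := 0) h_right hx

end SesquilinearMap

section GNSForm

variable {m R : Type*} [Fintype m] [CommSemiring R] [StarRing R]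

/-- The GNS form `⟨A, B⟩ = Tr (σ A† B)` at `σ`, as a sesquilinear form conjugate-linear in the
first argument. -/
def gnsForm (σ : Matrix m m R) : Matrix m m R →ₗ⋆[R] Matrix m m R →ₗ[R] R :=
  LinearMap.mk₂'ₛₗ (starRingEnd R) (RingHom.id R) (fun A B => (σ * Aᴴ * B).trace)
    (fun A A' B => by
      rw [conjTranspose_add, Matrix.mul_add, Matrix.add_mul, trace_add])
    (fun c A B => by
      rw [conjTranspose_smul, Matrix.mul_smul, Matrix.smul_mul, trace_smul, starRingEnd_apply])
    (fun A B B' => by rw [Matrix.mul_add, trace_add])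
    (fun c A B => by rw [Matrix.mul_smul, trace_smul, RingHom.id_apply])

theorem gnsForm_apply (σ A B : Matrix m m R) : gnsForm σ A B = (σ * Aᴴ * B).trace :=
  rfl

theorem gnsForm_one_left [DecidableEq m] (σ B : Matrix m m R) :
    gnsForm σ 1 B = (σ * B).trace := by
  rw [gnsForm_apply, conjTranspose_one, Matrix.mul_one]

theorem gnsForm_isSymm {σ : Matrix m m R} (hσ : σ.IsHermitian) : (gnsForm σ).IsSymm where
  eq A B := calc
    star (σ * Aᴴ * B).trace = (Bᴴ * (A * σ)).trace := by
      rw [← trace_conjTranspose, conjTranspose_mul, conjTranspose_mul, conjTranspose_conjTranspose,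
        hσ.eq]
    _ = (σ * Bᴴ * A).trace := by
      rw [← Matrix.mul_assoc, trace_mul_comm, Matrix.mul_assoc]

end GNSForm

section SiteProd

variable {d n : ℕ}

theorem siteProd_mul_siteProd (a b : Fin n → Matrix (Fin d) (Fin d) ℂ) :
    siteProd d n a * siteProd d n b = siteProd d n (fun i => a i * b i) := by
  ext x z
  simp only [mul_apply, siteProd, ← Finset.prod_mul_distrib]
  rw [Finset.prod_univ_sum, Fintype.piFinset_univ]

theorem conjTranspose_siteProd (a : Fin n → Matrix (Fin d) (Fin d) ℂ) :
    (siteProd d n a)ᴴ = siteProd d n (fun i => (a i)ᴴ) := by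
  ext x z
  exact map_prod (starRingEnd ℂ) (fun i => a i (z i) (x i)) Finset.univ

theorem trace_siteProd (a : Fin n → Matrix (Fin d) (Fin d) ℂ) :
    (siteProd d n a).trace = ∏ i, (a i).trace := by
  simp only [trace, diag_apply, siteProd]
  rw [Finset.prod_univ_sum, Fintype.piFinset_univ]

theorem tensorPow_eq_siteProd (ρ : Matrix (Fin d) (Fin d) ℂ) :
    tensorPow d n ρ = siteProd d n (fun _ => ρ) :=
  rfl

theorem gnsForm_tensorPow_siteProd (ρ : Matrix (Fin d) (Fin d) ℂ)
    (a b : Fin n → Matrix (Fin d) (Fin d) ℂ) :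
    gnsForm (tensorPow d n ρ) (siteProd d n a) (siteProd d n b) =
      ∏ i, gnsForm ρ (a i) (b i) := by
  simp only [gnsForm_apply, tensorPow_eq_siteProd, conjTranspose_siteProd, siteProd_mul_siteProd,
    trace_siteProd]

end SiteProd

theorem TS_orthogonal_general {d n : ℕ} {ρ : Matrix (Fin d) (Fin d) ℂ} (hρ : ρ.IsHermitian)
    {S S' : Finset (Fin n)} (hSS' : S ≠ S')
    {A B : Matrix (Fin n → Fin d) (Fin n → Fin d) ℂ}
    (hA : A ∈ TS d n ρ S) (hB : B ∈ TS d n ρ S') :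
    (tensorPow d n ρ * Aᴴ * B).trace = 0 := by
  refine apply_apply_eq_zero_of_mem_span (gnsForm (tensorPow d n ρ)) ?_ hA hB
  rintro _ ⟨a, ha_centred, ha_one, rfl⟩ _ ⟨b, hb_centred, hb_one, rfl⟩
  obtain ⟨i, hi⟩ : (symmDiff S S').Nonempty := Finset.symmDiff_nonempty.2 hSS'
  rw [gnsForm_tensorPow_siteProd]
  refine Finset.prod_eq_zero (Finset.mem_univ i) ?_
  rcases Finset.mem_symmDiff.1 hi with ⟨hi_mem, hi_notMem⟩ | ⟨hi_mem, hi_notMem⟩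
  · rw [hb_one i hi_notMem, (gnsForm_isSymm hρ).eq_iff, gnsForm_one_left]
    exact ha_centred i hi_mem
  · rw [ha_one i hi_notMem, gnsForm_one_left]
    exact hb_centred i hi_mem

/-- `T_Σ` and `T_{Σ'}` are orthogonal in the GNS inner product at `ρ^{⊗n}`
whenever `Σ ≠ Σ'`. -/
theorem TS_orthogonal
    (d n : ℕ) (hd : 1 ≤ d) (hn : 1 ≤ n)
    (ρ : Matrix (Fin d) (Fin d) ℂ) (hρ : ρ.PosSemidef) (hρtr : ρ.trace = 1)
    (S S' : Finset (Fin n)) (hSS' : S ≠ S')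
    (A B : Matrix (Fin n → Fin d) (Fin n → Fin d) ℂ)
    (hA : A ∈ TS d n ρ S) (hB : B ∈ TS d n ρ S') :
    (tensorPow d n ρ * Aᴴ * B).trace = 0 :=
  TS_orthogonal_general hρ.isHermitian hSS' hA hB
end
end

section
/- Let ρ be a d×d complex density matrix, let n ≥ 1, let y ≠ 0 be real, and let A be an n-site matrix with P(A) = 0, where P is the symmetrizing channel. Then the coarse-graining channel N = P ∘ D_y^⊗n annihilates the corresponding tangent vector: P( D_y^⊗n( Ω_{ρ^⊗n}(A) ) ) = 0, where Ω_{ρ^⊗n}(A) = (ρ^⊗n · A + A · ρ^⊗n)/2. -/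
open scoped ComplexOrder
open Matrix

noncomputable section

/-!
The symmetrizing channel `P` averages the conjugations `M ↦ U_π M U_π†`, so it commutes with every
linear map that is covariant under permutations of the sites. Both `Ω_σ`, for a permutation
invariant `σ`, and `D_y^{⊗n}` are such maps; hence `P (D_y^{⊗n} (Ω_σ A)) = D_y^{⊗n} (Ω_σ (P A))`.
-/

section SitePermutation

variable {ι κ R : Type*} [Fintype ι] [DecidableEq ι] [Fintype κ] [DecidableEq κ] [CommSemiring R]

/-- Conjugation `M ↦ U_π M U_π†` by a permutation `π` of the sites, encoded as the algebra
automorphism that relabels the sites, so that no permutation matrices occur in computations. -/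
def permConj (π : Equiv.Perm ι) : Matrix (ι → κ) (ι → κ) R ≃ₐ[R] Matrix (ι → κ) (ι → κ) R :=
  Matrix.reindexAlgEquiv R R (π.arrowCongr (Equiv.refl κ))

lemma permConj_apply (π : Equiv.Perm ι) (M : Matrix (ι → κ) (ι → κ) R) (x z : ι → κ) :
    permConj π M x z = M (x ∘ π) (z ∘ π) :=
  rfl

end SitePermutation

section TraceOut

variable {ι κ R : Type*} [DecidableEq ι] [Fintype κ] [DecidableEq κ] [CommSemiring R]

/-- The map `M ↦ Tr_i M ⊗ I_i` that traces out site `i` and puts the identity in its place. -/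
def traceOut (i : ι) : Module.End R (Matrix (ι → κ) (ι → κ) R) where
  toFun M := Matrix.of fun x z =>
    if x i = z i then ∑ a, M (Function.update x i a) (Function.update z i a) else 0
  map_add' M N := by
    ext x z
    simp [Finset.sum_add_distrib, ite_add_zero]
  map_smul' c M := by
    ext x z
    simp [Finset.mul_sum]

lemma traceOut_apply (i : ι) (M : Matrix (ι → κ) (ι → κ) R) (x z : ι → κ) :
    traceOut i M x z =
      if x i = z i then ∑ a, M (Function.update x i a) (Function.update z i a) else 0 :=
  rfl

lemma traceOut_traceOut_apply {i j : ι} (hij : i ≠ j) (M : Matrix (ι → κ) (ι → κ) R)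
    (x z : ι → κ) :
    traceOut i (traceOut j M) x z =
      if x i = z i ∧ x j = z j then
        ∑ a, ∑ b, M (Function.update (Function.update x i a) j b)
          (Function.update (Function.update z i a) j b)
      else 0 := by
  by_cases hi : x i = z i <;> by_cases hj : x j = z j <;>
    simp [traceOut_apply, Function.update_of_ne hij.symm, hi, hj]

lemma commute_traceOut (i j : ι) :
    Commute (traceOut i : Module.End R (Matrix (ι → κ) (ι → κ) R)) (traceOut j) := by
  rcases eq_or_ne i j with rfl | hij
  · exact Commute.refl _
  refine LinearMap.ext fun M => Matrix.ext fun x z => ?_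
  simp only [Module.End.mul_apply, traceOut_traceOut_apply hij, traceOut_traceOut_apply hij.symm,
    and_comm, Function.update_comm hij]
  rw [Finset.sum_comm]

lemma permConj_traceOut [Fintype ι] (π : Equiv.Perm ι) (i : ι) (M : Matrix (ι → κ) (ι → κ) R) :
    permConj π (traceOut i M) = traceOut (π i) (permConj π M) := by
  ext x z
  simp only [permConj_apply, traceOut_apply, Function.comp_apply,
    Function.update_comp_eq_of_injective _ π.injective]

end TraceOut

section Depolarizing

variable (d n : ℕ) (y : ℝ)

/-- `D_y` on site `i`, bundled as the linear endomorphism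
`y⁻¹ • id + ((1 - y⁻¹) / d) • (Tr_i ⊗ I_i)`. -/
def depolSiteEnd (i : Fin n) : Module.End ℂ (Matrix (Fin n → Fin d) (Fin n → Fin d) ℂ) :=
  ((y⁻¹ : ℝ) : ℂ) • 1 + (((1 - y⁻¹ : ℝ) : ℂ) / (d : ℂ)) • traceOut i

lemma coe_depolSiteEnd (i : Fin n) : ⇑(depolSiteEnd d n y i) = depolSite d n y i :=
  rfl

lemma commute_depolSiteEnd (i j : Fin n) :
    Commute (depolSiteEnd d n y i) (depolSiteEnd d n y j) :=
  have traceOut_commute : Commute (traceOut i) (depolSiteEnd d n y j) :=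
    ((Commute.one_right _).smul_right _).add_right ((commute_traceOut i j).smul_right _)
  ((Commute.one_left _).smul_left _).add_left (traceOut_commute.smul_left _)

lemma permConj_depolSiteEnd (π : Equiv.Perm (Fin n)) (i : Fin n)
    (M : Matrix (Fin n → Fin d) (Fin n → Fin d) ℂ) :
    permConj π (depolSiteEnd d n y i M) = depolSiteEnd d n y (π i) (permConj π M) := by
  simp [depolSiteEnd, permConj_traceOut]

/-- `D_y^{⊗n}` bundled as a linear endomorphism: the product of its commuting
single-site factors. -/
def depolPowEnd : Module.End ℂ (Matrix (Fin n → Fin d) (Fin n → Fin d) ℂ) :=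
  ((List.finRange n).map (depolSiteEnd d n y)).prod

lemma coe_depolPowEnd : ⇑(depolPowEnd d n y) = depolPow d n y := by
  rw [depolPowEnd, depolPow]
  induction List.finRange n with
  | nil => rfl
  | cons i l ih =>
    rw [List.map_cons, List.prod_cons, List.foldr_cons, ← ih, ← coe_depolSiteEnd]
    rfl

lemma permConj_prod_depolSiteEnd (π : Equiv.Perm (Fin n)) (l : List (Fin n))
    (M : Matrix (Fin n → Fin d) (Fin n → Fin d) ℂ) :
    permConj π ((l.map (depolSiteEnd d n y)).prod M) =
      ((l.map π).map (depolSiteEnd d n y)).prod (permConj π M) := by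
  induction l with
  | nil => rfl
  | cons i l ih =>
    simp only [List.map_cons, List.prod_cons, Module.End.mul_apply, permConj_depolSiteEnd, ih]

lemma permConj_depolPowEnd (π : Equiv.Perm (Fin n))
    (M : Matrix (Fin n → Fin d) (Fin n → Fin d) ℂ) :
    permConj π (depolPowEnd d n y M) = depolPowEnd d n y (permConj π M) := by
  have hperm : (((List.finRange n).map π).map (depolSiteEnd d n y)).Perm
      ((List.finRange n).map (depolSiteEnd d n y)) :=
    (Equiv.Perm.map_finRange_perm π).map _
  have hcomm : (((List.finRange n).map π).map (depolSiteEnd d n y)).Pairwise Commute :=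
    List.pairwise_map.mpr (List.pairwise_of_forall fun i j => commute_depolSiteEnd d n y i j)
  rw [depolPowEnd, permConj_prod_depolSiteEnd, hperm.prod_eq' hcomm]

end Depolarizing

section Omega

variable {m : Type*} [Fintype m]

/-- `Ω_σ` bundled as a linear endomorphism, so that `symmetrize_map` applies to it. -/
def omegaEnd (σ : Matrix m m ℂ) : Module.End ℂ (Matrix m m ℂ) :=
  (1 / 2 : ℂ) • (LinearMap.mulLeft ℂ σ + LinearMap.mulRight ℂ σ)

lemma coe_omegaEnd (σ : Matrix m m ℂ) : ⇑(omegaEnd σ) = Omega σ :=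
  rfl

lemma permConj_omega {ι κ : Type*} [Fintype ι] [DecidableEq ι] [Fintype κ] [DecidableEq κ]
    (π : Equiv.Perm ι) (σ A : Matrix (ι → κ) (ι → κ) ℂ) :
    permConj π (Omega σ A) = Omega (permConj π σ) (permConj π A) := by
  simp only [Omega, map_smul, map_add, map_mul]

end Omega

section Symmetrize

variable {d d' n : ℕ}

lemma permConj_tensorPow (π : Equiv.Perm (Fin n)) (ρ : Matrix (Fin d) (Fin d) ℂ) :
    permConj π (tensorPow d n ρ) = tensorPow d n ρ := by
  ext x z
  exact Equiv.prod_comp π fun i => ρ (x i) (z i)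

lemma permU_mul_mul_conjTranspose (π : Equiv.Perm (Fin n))
    (M : Matrix (Fin n → Fin d) (Fin n → Fin d) ℂ) :
    permU d n π * M * (permU d n π)ᴴ = permConj π M := by
  ext x z
  simp [Matrix.mul_apply, permU, Equiv.eq_comp_symm, permConj_apply, apply_ite]

lemma symmetrize_eq_sum_permConj (A : Matrix (Fin n → Fin d) (Fin n → Fin d) ℂ) :
    symmetrize d n A = (n.factorial : ℂ)⁻¹ • ∑ π : Equiv.Perm (Fin n), permConj π A := by
  simp only [symmetrize, permU_mul_mul_conjTranspose]

lemma symmetrize_map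
    (Φ : Matrix (Fin n → Fin d) (Fin n → Fin d) ℂ →ₗ[ℂ] Matrix (Fin n → Fin d') (Fin n → Fin d') ℂ)
    (hΦ : ∀ π M, permConj π (Φ M) = Φ (permConj π M))
    (A : Matrix (Fin n → Fin d) (Fin n → Fin d) ℂ) :
    symmetrize d' n (Φ A) = Φ (symmetrize d n A) := by
  simp only [symmetrize_eq_sum_permConj, hΦ, map_smul, map_sum]

lemma symmetrize_omega (σ : Matrix (Fin n → Fin d) (Fin n → Fin d) ℂ)
    (hσ : ∀ π, permConj π σ = σ) (A : Matrix (Fin n → Fin d) (Fin n → Fin d) ℂ) :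
    symmetrize d n (Omega σ A) = Omega σ (symmetrize d n A) :=
  symmetrize_map (omegaEnd σ) (fun π M => by rw [coe_omegaEnd, permConj_omega, hσ]) A

theorem coarse_graining_annihilates_general
    (Φ : Matrix (Fin n → Fin d) (Fin n → Fin d) ℂ →ₗ[ℂ] Matrix (Fin n → Fin d') (Fin n → Fin d') ℂ)
    (hΦ : ∀ π M, permConj π (Φ M) = Φ (permConj π M))
    (σ : Matrix (Fin n → Fin d) (Fin n → Fin d) ℂ) (hσ : ∀ π, permConj π σ = σ)
    (A : Matrix (Fin n → Fin d) (Fin n → Fin d) ℂ) (hA : symmetrize d n A = 0) :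
    symmetrize d' n (Φ (Omega σ A)) = 0 := by
  rw [symmetrize_map Φ hΦ, symmetrize_omega σ hσ, hA, ← coe_omegaEnd, map_zero, map_zero]

end Symmetrize

/-- if `P(A) = 0` then the coarse-graining channel `P ∘ D_y^{⊗n}` annihilates
the corresponding tangent vector `Ω_{ρ^{⊗n}}(A)`. -/
theorem coarse_graining_annihilates
    (d n : ℕ) (hd : 1 ≤ d) (hn : 1 ≤ n)
    (ρ : Matrix (Fin d) (Fin d) ℂ) (hρ : ρ.PosSemidef) (hρtr : ρ.trace = 1)
    (y : ℝ) (hy : y ≠ 0)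
    (A : Matrix (Fin n → Fin d) (Fin n → Fin d) ℂ) (hPA : symmetrize d n A = 0) :
    symmetrize d n (depolPow d n y (Omega (tensorPow d n ρ) A)) = 0 := by
  rw [← coe_depolPowEnd]
  exact coarse_graining_annihilates_general (depolPowEnd d n y) (permConj_depolPowEnd d n y)
    (tensorPow d n ρ) (fun π => permConj_tensorPow π ρ) A hPA
end
end
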